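/- arXiv:1402.0805 — 2 statements merged into one kernel-verified Lean document; each statement's English description precedes it below -/
import Mathlib

section
/- Let Q be a commutative ring, f ∈ Q a non-zero-divisor, and let (A,B) be a matrix factorization of f: A and B are m×m matrices with entries in Q satisfying A·B = f·I_m = B·A. Then: (1) the Q-linear map Q^m → Q^m given by multiplication by A is injective (and likewise for B); and (2) writing R = Q/(f) and Ā, B̄ for the reductions of A and B modulo (f), the induced two-periodic complex of R-modules ⋯ → R^m →(Ā) R^m →(B̄) R^m →(Ā) R^m → ⋯ is exact, i.e. the kernel of multiplication by Ā on R^m equals the image of multiplication by B̄, and the kernel of multiplication by B̄ equals the image of multiplication by Ā. -/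
/-!
Since `B * A = f • 1` and `f` is a non-zero-divisor, `A *ᵥ v` determines `f • v`, hence `v`, so
multiplication by `A` is injective. Modulo `f` the products `Ā * B̄` and `B̄ * Ā` vanish, which gives
`im B̄ ≤ ker Ā`. Conversely, if a lift `v` of an element of `ker Ā` satisfies
`A *ᵥ v = f • w`, then `A *ᵥ v = A *ᵥ (B *ᵥ w)`, and injectivity of `A` yields `v = B *ᵥ w`.
The hypotheses are symmetric in `A` and `B`, so each half is proved once and applied twice.
-/

theorem mulVec_injective_of_mul_eq_smul_one {Q : Type} [CommRing Q] {f : Q}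
    (hf : f ∈ nonZeroDivisors Q) {m : ℕ} {A B : Matrix (Fin m) (Fin m) Q}
    (hBA : B * A = f • (1 : Matrix (Fin m) (Fin m) Q)) :
    Function.Injective A.mulVecLin := by
  intro v w h
  have h' : f • v = f • w := by
    have := congrArg (B.mulVec ·) h
    simpa [Matrix.mulVec_mulVec, hBA, Matrix.smul_mulVec] using this
  funext i
  exact (mul_cancel_left_mem_nonZeroDivisors hf).mp (congrFun h' i)

theorem ker_map_eq_range_map {Q : Type} [CommRing Q] {f : Q}
    (hf : f ∈ nonZeroDivisors Q) {m : ℕ} {A B : Matrix (Fin m) (Fin m) Q}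
    (hAB : A * B = f • (1 : Matrix (Fin m) (Fin m) Q))
    (hBA : B * A = f • (1 : Matrix (Fin m) (Fin m) Q)) :
    LinearMap.ker (Matrix.mulVecLin (A.map (Ideal.Quotient.mk (Ideal.span {f})))) =
      LinearMap.range (Matrix.mulVecLin (B.map (Ideal.Quotient.mk (Ideal.span {f})))) := by
  apply le_antisymm
  · intro x hx
    obtain ⟨v, rfl⟩ := (Ideal.Quotient.mk_surjective (I := Ideal.span {f})).comp_left x
    have hdvd : ∀ i, ∃ c, A.mulVec v i = f * c := fun i => by
      have h := congrFun (LinearMap.mem_ker.mp hx) i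
      rw [Matrix.mulVecLin_apply, ← RingHom.map_mulVec, Pi.zero_apply,
        Ideal.Quotient.eq_zero_iff_mem, Ideal.mem_span_singleton] at h
      exact h
    choose w hw using hdvd
    have hv : v = B.mulVec w := by
      apply mulVec_injective_of_mul_eq_smul_one hf hBA
      funext i
      simp [Matrix.mulVec_mulVec, hAB, Matrix.smul_mulVec, hw]
    refine ⟨Ideal.Quotient.mk (Ideal.span {f}) ∘ w, ?_⟩
    funext i
    rw [Matrix.mulVecLin_apply, ← RingHom.map_mulVec, hv]
    rfl
  · rintro _ ⟨y, rfl⟩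
    have hf0 : Ideal.Quotient.mk (Ideal.span {f}) f = 0 :=
      Ideal.Quotient.eq_zero_iff_mem.mpr (Ideal.mem_span_singleton_self f)
    have h0 : A.map (Ideal.Quotient.mk (Ideal.span {f})) *
        B.map (Ideal.Quotient.mk (Ideal.span {f})) = 0 := by
      rw [← Matrix.map_mul, hAB]
      ext i j
      simp [hf0]
    rw [LinearMap.mem_ker, Matrix.mulVecLin_apply, Matrix.mulVecLin_apply,
      Matrix.mulVec_mulVec, h0, Matrix.zero_mulVec]

/-- Let `(A, B)` be a matrix factorization of a non-zero-divisor `f` in a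
commutative ring `Q`, i.e. `A * B = f • 1 = B * A`.  Then multiplication by `A` (and by `B`)
is injective on `Q^m`, and the reductions `Ā, B̄` modulo `(f)` yield an exact two-periodic
complex over `R = Q/(f)`: `ker Ā = im B̄` and `ker B̄ = im Ā`. -/
theorem matrixFactorization_injective_and_two_periodic_exact
    (Q : Type) [CommRing Q] (f : Q) (hf : f ∈ nonZeroDivisors Q)
    (m : ℕ) (A B : Matrix (Fin m) (Fin m) Q)
    (hAB : A * B = f • (1 : Matrix (Fin m) (Fin m) Q))
    (hBA : B * A = f • (1 : Matrix (Fin m) (Fin m) Q)) :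
    (Function.Injective A.mulVecLin ∧ Function.Injective B.mulVecLin) ∧
      (LinearMap.ker (Matrix.mulVecLin (A.map (Ideal.Quotient.mk (Ideal.span {f})))) =
          LinearMap.range (Matrix.mulVecLin (B.map (Ideal.Quotient.mk (Ideal.span {f})))) ∧
        LinearMap.ker (Matrix.mulVecLin (B.map (Ideal.Quotient.mk (Ideal.span {f})))) =
          LinearMap.range (Matrix.mulVecLin (A.map (Ideal.Quotient.mk (Ideal.span {f}))))) := by
  exact ⟨⟨mulVec_injective_of_mul_eq_smul_one hf hBA, mulVec_injective_of_mul_eq_smul_one hf hAB⟩,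
    ker_map_eq_range_map hf hAB hBA, ker_map_eq_range_map hf hBA hAB⟩
end

section
/- Let k be a field with algebraic closure k̄, and let A be a commutative k-algebra of finite Krull dimension. Suppose there is a natural number M such that for every prime ideal p of A, the residue field κ(p) has transcendence degree at most M over k. Then: (1) for every prime ideal q of A ⊗_k k̄, the residue field κ(q) is algebraic over the image of κ(q ∩ A), and has transcendence degree at most M over k̄; and (2) the Krull dimension of A ⊗_k k̄ equals the Krull dimension of A. -/
/-!
The ring `B = A ⊗[k] k̄` is integral over `A`, since `k̄` is algebraic over `k`, and it is free
over `A`, since `k̄` is free over `k`.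

Integrality passes to `B ⧸ q` over `A ⧸ (q ∩ A)`, so `κ(q)` is algebraic over `κ(q ∩ A)`
(`residueFieldMap_isAlgebraic`). By additivity of transcendence degrees in
`k → κ(q ∩ A) → κ(q)`, the field `κ(q)` has the same transcendence degree over `k` as `κ(q ∩ A)`,
and a family that is algebraically independent over `k̄` is also independent over `k`
(`not_algebraicIndependent_of_tower`).

For the Krull dimension, contraction of primes is strictly monotone along an integral extension
(incomparability), which gives `dim B ≤ dim A`. Conversely lying over (from integrality and
injectivity of `A → B`) together with going down (from flatness) lifts every chain of primes of
`A` to `B` (`ringKrullDim_eq_of_isIntegral_of_flat`).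
-/

open TensorProduct

/-- The canonical map on residue fields `κ(q ∩ A) →+* κ(q)` induced by a ring map
`φ : A →+* B` and a prime `q` of `B`, where the residue field at a prime `p` is realized as
the fraction field of the quotient domain. -/
noncomputable def residueFieldMap (A B : Type) [CommRing A] [CommRing B] (φ : A →+* B)
    (q : Ideal B) [q.IsPrime] :
    FractionRing (A ⧸ q.comap φ) →+* FractionRing (B ⧸ q) :=
  IsFractionRing.map (j := Ideal.quotientMap q φ le_rfl)
    (Ideal.quotientMap_injective' le_rfl)

/-- The `k`-algebra structure on the residue field `κ(p) = Frac(A/p)` of a `k`-algebra `A`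
at a prime `p`. -/
noncomputable def kappaAlgebra (k : Type) [CommRing k] (A : Type) [CommRing A] [Algebra k A]
    (p : Ideal A) [p.IsPrime] : Algebra k (FractionRing (A ⧸ p)) :=
  ((algebraMap (A ⧸ p) (FractionRing (A ⧸ p))).comp (algebraMap k (A ⧸ p))).toAlgebra

theorem residueFieldMap_algebraMap (A B : Type) [CommRing A] [CommRing B] (φ : A →+* B)
    (q : Ideal B) [q.IsPrime] (x : A ⧸ q.comap φ) :
    residueFieldMap A B φ q (algebraMap _ _ x) =
      algebraMap (B ⧸ q) (FractionRing (B ⧸ q)) (Ideal.quotientMap q φ le_rfl x) := by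
  unfold residueFieldMap IsFractionRing.map
  exact IsLocalization.map_eq _ x

/-- A ring map making `B` integral over `A` induces algebraic extensions of residue fields. -/
theorem residueFieldMap_isAlgebraic (A B : Type) [CommRing A] [CommRing B] (φ : A →+* B)
    (hφ : φ.IsIntegral) (q : Ideal B) [q.IsPrime] :
    letI := (residueFieldMap A B φ q).toAlgebra
    Algebra.IsAlgebraic (FractionRing (A ⧸ q.comap φ)) (FractionRing (B ⧸ q)) := by
  let j : A ⧸ q.comap φ →+* B ⧸ q := Ideal.quotientMap q φ le_rfl
  let jalg : Algebra (A ⧸ q.comap φ) (B ⧸ q) := j.toAlgebra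
  let falg : Algebra (FractionRing (A ⧸ q.comap φ)) (FractionRing (B ⧸ q)) :=
    (residueFieldMap A B φ q).toAlgebra
  let calg : Algebra (A ⧸ q.comap φ) (FractionRing (B ⧸ q)) :=
    ((algebraMap (B ⧸ q) (FractionRing (B ⧸ q))).comp j).toAlgebra
  have t1 : @IsScalarTower (A ⧸ q.comap φ) (B ⧸ q) (FractionRing (B ⧸ q))
      jalg.toSMul _ calg.toSMul := .of_algebraMap_eq' rfl
  have t2 : @IsScalarTower (A ⧸ q.comap φ) (FractionRing (A ⧸ q.comap φ)) (FractionRing (B ⧸ q))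
      _ falg.toSMul calg.toSMul :=
    .of_algebraMap_eq fun x ↦ (residueFieldMap_algebraMap A B φ q x).symm
  have : Algebra.IsIntegral (A ⧸ q.comap φ) (B ⧸ q) := ⟨hφ.quotient⟩
  exact isAlgebraic_of_isFractionRing (A ⧸ q.comap φ) (B ⧸ q) _ _

/-- If `L / K` is algebraic and `k → K → L` agrees with `k → k' → L`, then a finite bound
on the transcendence degree of `K` over `k` also bounds that of `L` over `k'`. -/
theorem not_algebraicIndependent_of_tower {k k' K L : Type} [Field k] [Field k'] [Field K] [Field L]
    [Algebra k k'] [Algebra k K] [Algebra K L] [Algebra k' L] [Algebra.IsAlgebraic K L]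
    (hcomp : ∀ a, algebraMap K L (algebraMap k K a) = algebraMap k' L (algebraMap k k' a))
    {n : ℕ} (h : ∀ x : Fin n → K, ¬ AlgebraicIndependent k x)
    (x : Fin n → L) : ¬ AlgebraicIndependent k' x := by
  intro hx
  let : Algebra k L := ((algebraMap K L).comp (algebraMap k K)).toAlgebra
  have : IsScalarTower k K L := .of_algebraMap_eq' rfl
  have : IsScalarTower k k' L := .of_algebraMap_eq hcomp
  have hx' : AlgebraicIndependent k x := hx.restrictScalars (algebraMap k k').injective
  have hle : (n : Cardinal) ≤ Algebra.trdeg k K := by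
    have := hx'.cardinalMk_le_trdeg
    rwa [← trdeg_add_eq k K, trdeg_eq_zero (R := K), add_zero,
      Cardinal.mk_fin] at this
  obtain ⟨ι, b, hb⟩ := exists_isTranscendenceBasis' k K
  rw [← hb.cardinalMk_eq_trdeg, ← Cardinal.mk_fin] at hle
  obtain ⟨e⟩ := hle
  exact h (b ∘ e) (hb.1.comp e e.injective)

/-- For an integral map `A → B` compatible with `k → k'`, a finite bound on the transcendence
degree of `κ(q ∩ A)` over `k` also bounds that of `κ(q)` over `k'`. -/
theorem kappa_not_algebraicIndependent {k k' A B : Type} [Field k] [Field k'] [Algebra k k']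
    [CommRing A] [CommRing B] [Algebra k A] [Algebra k' B] (φ : A →+* B) (hφ : φ.IsIntegral)
    (hcomp : ∀ a, φ (algebraMap k A a) = algebraMap k' B (algebraMap k k' a))
    (q : Ideal B) [q.IsPrime] {n : ℕ}
    (h : letI := kappaAlgebra k A (q.comap φ)
      ∀ x : Fin n → FractionRing (A ⧸ q.comap φ), ¬ AlgebraicIndependent k x) :
    letI := kappaAlgebra k' B q
    ∀ x : Fin n → FractionRing (B ⧸ q), ¬ AlgebraicIndependent k' x := by
  let a₁ := kappaAlgebra k A (q.comap φ)
  let a₂ := (residueFieldMap A B φ q).toAlgebra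
  let a₃ := kappaAlgebra k' B q
  have halg : Algebra.IsAlgebraic (FractionRing (A ⧸ q.comap φ)) (FractionRing (B ⧸ q)) :=
    residueFieldMap_isAlgebraic A B φ hφ q
  refine @not_algebraicIndependent_of_tower k k' (FractionRing (A ⧸ q.comap φ))
    (FractionRing (B ⧸ q)) _ _ _ _ _ a₁ a₂ a₃ halg (fun a ↦ ?_) n h
  exact (residueFieldMap_algebraMap A B φ q _).trans
    (congrArg (fun b ↦ algebraMap (B ⧸ q) (FractionRing (B ⧸ q)) (Ideal.Quotient.mk q b))
      (hcomp a))

theorem ringKrullDim_eq_of_isIntegral_of_flat (A B : Type) [CommRing A] [CommRing B] [Algebra A B]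
    [Algebra.IsIntegral A B] [Module.Flat A B] [FaithfulSMul A B] :
    ringKrullDim B = ringKrullDim A := by
  apply le_antisymm
  · exact Order.krullDim_le_of_strictMono (PrimeSpectrum.comap (algebraMap A B))
      fun _ _ hpq ↦ Ideal.IsIntegral.comap_lt_comap hpq
  · refine iSup_le fun l ↦ ?_
    obtain ⟨Q, hQ, hQl⟩ := (inferInstance : Nonempty (l.last.asIdeal.primesOver B))
    obtain ⟨L, hL, -⟩ := Ideal.exists_ltSeries_of_hasGoingDown l Q
    rw [← hL]
    exact Order.LTSeries.length_le_krullDim L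

/-- Let `A` be a `k`-algebra of finite Krull dimension all of whose residue
fields have transcendence degree at most `M` over `k` (i.e. admit no algebraically independent
family of `M+1` elements).  Then every residue field of `A ⊗_k k̄` is algebraic over the image
of the corresponding residue field of `A` and has transcendence degree at most `M` over `k̄`,
and `A ⊗_k k̄` has the same Krull dimension as `A`. -/
theorem residue_fields_of_base_change_to_algebraic_closure
    (k : Type) [Field k] (A : Type) [CommRing A] [Algebra k A]
    (hdim : ∃ d : ℕ, ringKrullDim A ≤ d)
    (M : ℕ)
    (htrdeg : ∀ (p : Ideal A) [p.IsPrime],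
      letI := kappaAlgebra k A p;
      ∀ x : Fin (M + 1) → FractionRing (A ⧸ p), ¬ AlgebraicIndependent k x) :
    (∀ (q : Ideal (A ⊗[k] AlgebraicClosure k)) [q.IsPrime],
      (letI := (residueFieldMap A (A ⊗[k] AlgebraicClosure k)
          (algebraMap A (A ⊗[k] AlgebraicClosure k)) q).toAlgebra;
        Algebra.IsAlgebraic
          (FractionRing (A ⧸ q.comap (algebraMap A (A ⊗[k] AlgebraicClosure k))))
          (FractionRing ((A ⊗[k] AlgebraicClosure k) ⧸ q))) ∧
      (letI : Algebra (AlgebraicClosure k) (A ⊗[k] AlgebraicClosure k) :=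
          (Algebra.TensorProduct.includeRight.toRingHom).toAlgebra;
        letI := kappaAlgebra (AlgebraicClosure k) (A ⊗[k] AlgebraicClosure k) q;
        ∀ x : Fin (M + 1) → FractionRing ((A ⊗[k] AlgebraicClosure k) ⧸ q),
          ¬ AlgebraicIndependent (AlgebraicClosure k) x)) ∧
    ringKrullDim (A ⊗[k] AlgebraicClosure k) = ringKrullDim A := by
  have hint : (algebraMap A (A ⊗[k] AlgebraicClosure k)).IsIntegral :=
    algebraMap_isIntegral_iff.2 inferInstance
  refine ⟨fun q _ ↦ ?_, ?_⟩
  · refine ⟨residueFieldMap_isAlgebraic A (A ⊗[k] AlgebraicClosure k) _ hint q, ?_⟩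
    let : Algebra (AlgebraicClosure k) (A ⊗[k] AlgebraicClosure k) :=
      Algebra.TensorProduct.includeRight.toRingHom.toAlgebra
    exact kappa_not_algebraicIndependent (k := k) _ hint
      -- Both sides are `a ⊗ 1 = 1 ⊗ a`.
      (fun a ↦ RingHom.congr_fun Algebra.TensorProduct.includeLeftRingHom_comp_algebraMap a)
      q (htrdeg _)
  · exact ringKrullDim_eq_of_isIntegral_of_flat A _
end
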